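/- Let (A_{a_i} b_i)_{i=1}^n be the k-sandwiching sequence of m where m ≡_k A_a b. Then exactly one of the following cases occurs: (a) n = 1 and ⟨m⟩₋₁ = b = 0; (b) n > 1 and 0 < ⟨m⟩₋₁ = b and b ≡_k A_{a_{−1}} b_{−1}; (c) ⟨m⟩₋₁ < b and b ≡_k A_d e + s for some d, e, s with d ≤ a_{n−1} in case n > 1, and either d ≤ a or s > 0. -/

import Mathlib

/-- The base-`k` Ackermann function `A_a(k, b)`:
`A_0(k, b) = k ^ b` and `A_{a+1}(k, b) = A_a^k(k, A_{a+1}(k, b-1))`,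
with the auxiliary value `A_{a+1}(k, -1) = 1`
(equivalently, `A_{a+1}(k, b) = (A_a^k)^[b+1] (1)`). -/
def Ack (k : ℕ) : ℕ → ℕ → ℕ
  | 0, b => k ^ b
  | a + 1, b => ((Ack k a)^[k])^[b + 1] 1

/-- `IsSandwich k m n a b ms` says that `(A_{a i}(k, b i))_{i=1}^n` is a
`k`-sandwiching sequence for `m`, with sandwiching values `(ms i)_{i=0}^n`:
`ms 0 = 0`; for each `i < n`, `A_{a (i+1)} (ms i) ≤ m < A_{a (i+1) + 1} (ms i)`,
`A_{a (i+1)} (b (i+1)) ≤ m < A_{a (i+1)} (b (i+1) + 1)`, and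
`ms (i+1) = A_{a (i+1)} (b (i+1))`; and `A_0 (ms n) > m`. -/
structure IsSandwich (k m n : ℕ) (a b ms : ℕ → ℕ) : Prop where
  ms_zero : ms 0 = 0
  idx_lo : ∀ i < n, Ack k (a (i + 1)) (ms i) ≤ m
  idx_hi : ∀ i < n, m < Ack k (a (i + 1) + 1) (ms i)
  arg_lo : ∀ i < n, Ack k (a (i + 1)) (b (i + 1)) ≤ m
  arg_hi : ∀ i < n, m < Ack k (a (i + 1)) (b (i + 1) + 1)
  ms_succ : ∀ i < n, ms (i + 1) = Ack k (a (i + 1)) (b (i + 1))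
  halt : m < Ack k 0 (ms n)

/-- `NF k m a b c` says that `m ≡_k A_a b + c`, i.e. `m` has `k`-normal form
`A_a b + c` (so `m = A_a b + c` and the `k`-sandwiching sequence of `m` ends
with the pair `(a, b)`). -/
def NF (k m a b c : ℕ) : Prop :=
  m = Ack k a b + c ∧
    ∃ n as bs ms, 1 ≤ n ∧ IsSandwich k m n as bs ms ∧ a = as n ∧ b = bs n

theorem aux_iter (f : ℕ → ℕ) (hf : ∀ x, x < f x) (j x : ℕ) : x + j ≤ f^[j] x := by
  induction j with
  | zero => simp
  | succ j ih =>
    rw [Function.iterate_succ_apply']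
    have := hf (f^[j] x)
    omega

theorem Ack_basic (k : ℕ) (hk : 2 ≤ k) (a : ℕ) :
    StrictMono (Ack k a) ∧ ∀ x, x < Ack k a x := by
  induction a with
  | zero =>
    have h1 : StrictMono (Ack k 0) := by
      intro x y h
      simp only [Ack]
      exact Nat.pow_lt_pow_right (by omega) h
    refine ⟨h1, fun x => ?_⟩
    simp only [Ack]
    exact Nat.lt_pow_self (by omega)
  | succ a ih =>
    have hF : ∀ x, x < (Ack k a)^[k] x := by
      intro x
      have := aux_iter _ ih.2 k x
      omega
    constructor
    · apply strictMono_nat_of_lt_succ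
      intro x
      simp only [Ack]
      rw [Function.iterate_succ_apply' _ (x + 1)]
      exact hF _
    · intro x
      have := aux_iter _ hF (x + 1) 1
      simp only [Ack]
      omega

theorem Ack_idx_lt (k : ℕ) (hk : 2 ≤ k) (x : ℕ) : StrictMono (fun a => Ack k a x) := by
  apply strictMono_nat_of_lt_succ
  intro a
  obtain ⟨h1, h2⟩ := Ack_basic k hk a
  have hF : ∀ x, x < (Ack k a)^[k] x := by
    intro x
    have := aux_iter _ h2 k x
    omega
  have h3 : x + 1 ≤ ((Ack k a)^[k])^[x] 1 := by
    have := aux_iter _ hF x 1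
    omega
  simp only [Ack]
  rw [Function.iterate_succ_apply']
  obtain ⟨j, rfl⟩ : ∃ j, k = j + 1 := ⟨k - 1, by omega⟩
  rw [Function.iterate_succ_apply']
  apply h1
  have := aux_iter _ h2 j (((Ack (j+1) a)^[j+1])^[x] 1)
  omega

theorem exists_max (f : ℕ → ℕ) (hf : StrictMono f) (x b : ℕ) (h : f x ≤ b) :
    ∃ y, x ≤ y ∧ f y ≤ b ∧ b < f (y + 1) := by
  have hx : x ≤ b := le_trans (hf.id_le x) h
  refine ⟨Nat.findGreatest (fun y => f y ≤ b) b, Nat.le_findGreatest hx h,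
    Nat.findGreatest_spec (P := fun y => f y ≤ b) hx h, ?_⟩
  by_contra hc
  push Not at hc
  have h1 := hf.id_le (Nat.findGreatest (fun y => f y ≤ b) b + 1)
  have h2 := Nat.le_findGreatest (P := fun y => f y ≤ b) (le_trans h1 hc) hc
  simp at h2

structure PreS (k m n : ℕ) (a b ms : ℕ → ℕ) : Prop where
  ms_zero : ms 0 = 0
  idx_lo : ∀ i < n, Ack k (a (i + 1)) (ms i) ≤ m
  idx_hi : ∀ i < n, m < Ack k (a (i + 1) + 1) (ms i)
  arg_lo : ∀ i < n, Ack k (a (i + 1)) (b (i + 1)) ≤ m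
  arg_hi : ∀ i < n, m < Ack k (a (i + 1)) (b (i + 1) + 1)
  ms_succ : ∀ i < n, ms (i + 1) = Ack k (a (i + 1)) (b (i + 1))

theorem PreS_extend (k m : ℕ) (hk : 2 ≤ k) (N : ℕ) : ∀ (p : ℕ) (a b ms : ℕ → ℕ),
    PreS k m p a b ms → m - ms p ≤ N → ms p ≤ m →
    ∃ (n' : ℕ) (a' b' ms' : ℕ → ℕ), IsSandwich k m n' a' b' ms' ∧
      ((n' = p ∧ a' = a ∧ b' = b ∧ ms' = ms) ∨ (p < n' ∧ Ack k (a' n') (ms p) ≤ m)) := by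
  induction N with
  | zero =>
    intro p a b ms h h1 h2
    refine ⟨p, a, b, ms, ⟨h.1, h.2, h.3, h.4, h.5, h.6, ?_⟩, Or.inl ⟨rfl, rfl, rfl, rfl⟩⟩
    have := (Ack_basic k hk 0).2 (ms p)
    omega
  | succ N ih =>
    intro p a b ms h h1 h2
    by_cases hh : m < Ack k 0 (ms p)
    · exact ⟨p, a, b, ms, ⟨h.1, h.2, h.3, h.4, h.5, h.6, hh⟩, Or.inl ⟨rfl, rfl, rfl, rfl⟩⟩
    push Not at hh
    obtain ⟨α, -, hα1, hα2⟩ := exists_max _ (Ack_idx_lt k hk (ms p)) 0 m hh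
    obtain ⟨β, hβ0, hβ1, hβ2⟩ := exists_max _ (Ack_basic k hk α).1 (ms p) m hα1
    have hgt := (Ack_basic k hk α).2 β
    let a1 := fun i => if i = p + 1 then α else a i
    let b1 := fun i => if i = p + 1 then β else b i
    let ms1 := fun i => if i = p + 1 then Ack k α β else ms i
    have ea : a1 (p+1) = α := by simp [a1]
    have eb : b1 (p+1) = β := by simp [b1]
    have em : ms1 (p+1) = Ack k α β := by simp [ms1]
    have na : ∀ i, i ≤ p → a1 i = a i := fun i hi => by
      simp only [a1]; rw [if_neg (by omega)]
    have nb : ∀ i, i ≤ p → b1 i = b i := fun i hi => by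
      simp only [b1]; rw [if_neg (by omega)]
    have nm : ∀ i, i ≤ p → ms1 i = ms i := fun i hi => by
      simp only [ms1]; rw [if_neg (by omega)]
    have hpre : PreS k m (p+1) a1 b1 ms1 := by
      refine ⟨by rw [nm 0 (by omega)]; exact h.1, ?_, ?_, ?_, ?_, ?_⟩ <;>
      · intro i hi
        rcases Nat.lt_succ_iff_lt_or_eq.1 hi with hi' | rfl
        · simp only [na (i+1) hi', nb (i+1) hi', nm (i+1) hi', nm i hi'.le]
          first
          | exact h.2 i hi' | exact h.3 i hi' | exact h.4 i hi' | exact h.5 i hi'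
          | exact h.6 i hi'
        · simp only [ea, eb, em, nm i le_rfl]
          try assumption
    obtain ⟨n', a', b', ms', hS, hor⟩ := ih (p+1) a1 b1 ms1 hpre (by omega) (by omega)
    refine ⟨n', a', b', ms', hS, Or.inr ?_⟩
    rcases hor with ⟨rfl, rfl, rfl, rfl⟩ | ⟨hlt, hle⟩
    · rw [ea]
      exact ⟨by omega, hα1⟩
    · refine ⟨by omega, le_trans ((Ack_basic k hk _).1.monotone ?_) hle⟩
      rw [em]; omega

theorem ms_mono (k m n : ℕ) (hk : 2 ≤ k) (a b ms : ℕ → ℕ) (h : IsSandwich k m n a b ms) :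
    ∀ i < n, ms i ≤ b (i + 1) ∧ ms i ≤ ms (i + 1) := by
  intro i hi
  have h1 := lt_of_le_of_lt (h.idx_lo i hi) (h.arg_hi i hi)
  have h2 := (Ack_basic k hk _).1.lt_iff_lt.1 h1
  have h3 := (Ack_basic k hk (a (i+1))).2 (b (i+1))
  rw [h.ms_succ i hi]
  omega

theorem ms_mono' (k m n : ℕ) (hk : 2 ≤ k) (a b ms : ℕ → ℕ) (h : IsSandwich k m n a b ms)
    (i d : ℕ) : i + d ≤ n → ms i ≤ ms (i + d) := by
  induction d with
  | zero => simp
  | succ d ih =>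
    intro hd
    exact le_trans (ih (by omega)) (ms_mono k m n hk a b ms h (i + d) (by omega)).2

theorem stmt_6 (k n m : ℕ) (aseq bseq ms : ℕ → ℕ) (hk : 2 ≤ k) (hn : 1 ≤ n)
    (hs : IsSandwich k m n aseq bseq ms) (hm : m = Ack k (aseq n) (bseq n)) :
    ((n = 1 ∧ ms (n - 1) = bseq n ∧ bseq n = 0) ∨
      (1 < n ∧ 0 < ms (n - 1) ∧ ms (n - 1) = bseq n ∧
        NF k (bseq n) (aseq (n - 1)) (bseq (n - 1)) 0) ∨
      (ms (n - 1) < bseq n ∧ ∃ d e s, NF k (bseq n) d e s ∧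
        (1 < n → d ≤ aseq (n - 1)) ∧ (d ≤ aseq n ∨ 0 < s))) ∧
    ¬((n = 1 ∧ ms (n - 1) = bseq n ∧ bseq n = 0) ∧
      (1 < n ∧ 0 < ms (n - 1) ∧ ms (n - 1) = bseq n ∧
        NF k (bseq n) (aseq (n - 1)) (bseq (n - 1)) 0)) ∧
    ¬((n = 1 ∧ ms (n - 1) = bseq n ∧ bseq n = 0) ∧
      (ms (n - 1) < bseq n ∧ ∃ d e s, NF k (bseq n) d e s ∧
        (1 < n → d ≤ aseq (n - 1)) ∧ (d ≤ aseq n ∨ 0 < s))) ∧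
    ¬((1 < n ∧ 0 < ms (n - 1) ∧ ms (n - 1) = bseq n ∧
        NF k (bseq n) (aseq (n - 1)) (bseq (n - 1)) 0) ∧
      (ms (n - 1) < bseq n ∧ ∃ d e s, NF k (bseq n) d e s ∧
        (1 < n → d ≤ aseq (n - 1)) ∧ (d ≤ aseq n ∨ 0 < s))) := by
  refine ⟨?_, by rintro ⟨⟨h1, h2, h3⟩, h4, -⟩; omega, by rintro ⟨⟨h1, h2, h3⟩, h4, -⟩; omega,
    by rintro ⟨⟨h1, h2, h3, -⟩, h4, -⟩; omega⟩
  obtain ⟨p, rfl⟩ : ∃ p, n = p + 1 := ⟨n - 1, by omega⟩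
  simp only [Nat.add_sub_cancel]
  have hmb : bseq (p+1) < m := by rw [hm]; exact (Ack_basic k hk _).2 _
  have hle := (ms_mono k m (p+1) hk _ _ _ hs p (by omega)).1
  have hmono : ∀ i ≤ p, ms i ≤ ms p := by
    intro i hi
    have := ms_mono' k m (p+1) hk _ _ _ hs i (p - i) (by omega)
    rwa [Nat.add_sub_cancel' hi] at this
  have hlow : ∀ i < p, Ack k (aseq (i+1)) (bseq (i+1)) ≤ bseq (p+1) := by
    intro i hi
    rw [← hs.ms_succ i (by omega)]
    exact le_trans (hmono _ (by omega)) hle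
  have hpre : PreS k (bseq (p+1)) p aseq bseq ms := by
    refine ⟨hs.1, ?_, ?_, hlow, ?_, ?_⟩
    · intro i hi
      exact le_trans ((Ack_basic k hk _).1.monotone
        (ms_mono k m (p+1) hk _ _ _ hs i (by omega)).1) (hlow i hi)
    · intro i hi
      exact hmb.trans (hs.idx_hi i (by omega))
    · intro i hi
      exact hmb.trans (hs.arg_hi i (by omega))
    · intro i hi
      exact hs.ms_succ i (by omega)
  rcases Nat.eq_zero_or_pos p with hp | hp
  · subst hp
    rcases Nat.eq_zero_or_pos (bseq 1) with hb | hb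
    · left
      refine ⟨rfl, ?_, hb⟩
      rw [hs.ms_zero, zero_add, hb]
    · right; right
      obtain ⟨n', a', b', ms', hS, hor⟩ := PreS_extend k _ hk _ 0 _ _ _ hpre le_rfl hle
      rcases hor with ⟨rfl, rfl, rfl, rfl⟩ | ⟨hlt, hA⟩
      · have := hS.halt
        rw [hS.ms_zero] at this
        simp [Ack] at this
        omega
      · refine ⟨by rw [hs.ms_zero]; exact hb, a' n', b' n',
          bseq (0+1) - Ack k (a' n') (b' n'), ⟨?_, n', a', b', ms', hlt, hS, rfl, rfl⟩,
          fun h => by omega, Or.inl ?_⟩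
        · have := hS.arg_lo (n' - 1) (by omega)
          rw [Nat.sub_add_cancel (by omega)] at this
          omega
        · have h1 := (hA.trans_lt hmb).trans (hs.idx_hi 0 (by omega))
          have := (Ack_idx_lt k hk (ms 0)).lt_iff_lt.1 h1
          omega
  · have hmsp : ms p = Ack k (aseq p) (bseq p) := by
      have := hs.ms_succ (p - 1) (by omega)
      rwa [Nat.sub_add_cancel (by omega)] at this
    have hgt := (Ack_basic k hk (aseq p)).2 (bseq p)
    have hahi : m < Ack k (aseq p) (bseq p + 1) := by
      have := hs.arg_hi (p - 1) (by omega)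
      rwa [Nat.sub_add_cancel (by omega)] at this
    rcases hle.eq_or_lt with heq | hlt
    · right; left
      refine ⟨by omega, by omega, heq, by omega, p, aseq, bseq, ms, hp,
        ⟨hpre.1, hpre.2, hpre.3, hpre.4, hpre.5, hpre.6, ?_⟩, rfl, rfl⟩
      rw [← heq]
      exact (Ack_basic k hk 0).2 _
    · right; right
      refine ⟨hlt, ?_⟩
      obtain ⟨n', a', b', ms', hS, hor⟩ := PreS_extend k _ hk _ p _ _ _ hpre le_rfl hle
      rcases hor with ⟨rfl, rfl, rfl, rfl⟩ | ⟨hlt', hA⟩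
      · exact ⟨a' n', b' n', b' (n'+1) - ms' n', ⟨by omega, n', a', b', ms', hp, hS, rfl, rfl⟩,
          fun _ => le_rfl, Or.inr (by omega)⟩
      · refine ⟨a' n', b' n',
          bseq (p+1) - Ack k (a' n') (b' n'), ⟨?_, n', a', b', ms', by omega, hS, rfl, rfl⟩,
          fun _ => ?_, Or.inl ?_⟩
        · have := hS.arg_lo (n' - 1) (by omega)
          rw [Nat.sub_add_cancel (by omega)] at this
          omega
        · have h1 : Ack k (aseq p) (bseq p + 1) ≤ Ack k (aseq p) (ms p) :=
            (Ack_basic k hk _).1.monotone (by omega)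
          have h2 := ((hA.trans_lt hmb).trans hahi).trans_le h1
          have := (Ack_idx_lt k hk (ms p)).lt_iff_lt.1 h2
          omega
        · have h1 := (hA.trans_lt hmb).trans (hs.idx_hi p (by omega))
          have := (Ack_idx_lt k hk (ms p)).lt_iff_lt.1 h1
          omega
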